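/- arXiv:2209.03783 — 9 statements merged into one kernel-verified Lean document; each statement's English description precedes it below -/
import Mathlib

section
/- Let (Λ̃,⟨,⟩) be an even unimodular nondegenerate lattice, n ≥ 2 an integer, v ∈ Λ̃ a primitive element with v² = 2n−2, and let L = {x ∈ Λ̃ : ⟨x,v⟩ = 0}. Let ε ∈ {1,−1} and let g be an isometry of L such that for every y ∈ L ⊗ ℚ satisfying ⟨y,x⟩ ∈ ℤ for all x ∈ L, one has (g ⊗ ℚ)(y) − ε·y ∈ L (i.e. g acts as ε·id on the discriminant group L^∨/L). Then there exists a unique isometry g̃ of Λ̃ with g̃(x) = g(x) for all x ∈ L and g̃(v) = ε·v. -/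
open TensorProduct

/-- **Extension lemma.** Let `Λ̃` be an even unimodular nondegenerate lattice, `n ≥ 2`,
`v ∈ Λ̃` primitive with `v² = 2n − 2`, and `L = v^⊥`. If `g` is an isometry of `L`
acting as `ε·Id` on the discriminant group `L^∨/L` (with `ε = ±1`), then `g` extends
uniquely to an isometry `g̃` of `Λ̃` with `g̃(v) = ε·v`. -/
theorem extension_of_isometry_to_mukai_lattice
    {Λ : Type*} [AddCommGroup Λ] [Module.Free ℤ Λ] [Module.Finite ℤ Λ]
    (B : LinearMap.BilinForm ℤ Λ)
    (hSymm : ∀ x y : Λ, B x y = B y x)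
    (hEven : ∀ x : Λ, 2 ∣ B x x)
    (hNondeg : ∀ x : Λ, (∀ y : Λ, B x y = 0) → x = 0)
    (hUnimod : Function.Bijective fun x : Λ => (B x : Λ →ₗ[ℤ] ℤ))
    (n : ℕ) (hn : 2 ≤ n)
    (v : Λ) (hv2 : B v v = 2 * (n : ℤ) - 2)
    (hvprim : ∀ (k : ℤ) (y : Λ), v = k • y → k = 1 ∨ k = -1)
    (L : Submodule ℤ Λ) (hL : ∀ x : Λ, x ∈ L ↔ B x v = 0)
    (ε : ℤ) (hε : ε = 1 ∨ ε = -1)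
    (g : L →ₗ[ℤ] L) (hgbij : Function.Bijective g)
    (hgisom : ∀ x y : L, B (g x : Λ) (g y : Λ) = B (x : Λ) (y : Λ))
    (hdisc : ∀ y : ℚ ⊗[ℤ] L,
      (∀ x : L, ∃ k : ℤ,
        (LinearMap.BilinForm.baseChange ℚ (B.domRestrict₁₂ L L)) y ((1 : ℚ) ⊗ₜ[ℤ] x) = (k : ℚ)) →
      ∃ z : L, (LinearMap.baseChange ℚ g) y - (ε : ℚ) • y = (1 : ℚ) ⊗ₜ[ℤ] z) :
    ∃! gt : Λ →ₗ[ℤ] Λ, Function.Bijective gt ∧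
      (∀ x y : Λ, B (gt x) (gt y) = B x y) ∧
      (∀ x : L, gt (x : Λ) = ((g x : L) : Λ)) ∧
      gt v = ε • v := by
  have htf : ∀ (a b : Λ) (d : ℤ), d ≠ 0 → d • a = d • b → a = b := fun a b d hd h =>
    smul_right_injective Λ hd h
  have hinj : ∀ a b : L, (1 : ℚ) ⊗ₜ[ℤ] a = (1 : ℚ) ⊗ₜ[ℤ] b → a = b := by
    intro a b h
    have hI : Function.Injective (LinearMap.rTensor L (Algebra.linearMap ℤ ℚ)) :=
      Module.Flat.rTensor_preserves_injective_linearMap _ (by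
        intro x y hxy
        simpa using hxy)
    have h2 : (1 : ℤ) ⊗ₜ[ℤ] a = (1 : ℤ) ⊗ₜ[ℤ] b := hI (by simpa using h)
    simpa using congrArg (TensorProduct.lid ℤ L) h2
  obtain ⟨d, hd⟩ : ∃ d : ℤ, d = B v v := ⟨_, rfl⟩
  have hd0 : d ≠ 0 := by
    have : (2 : ℤ) ≤ n := by exact_mod_cast hn
    omega
  have hεε : ε * ε = 1 := by rcases hε with h | h <;> simp [h]
  let P0 : Λ →ₗ[ℤ] Λ := d • LinearMap.id - (B v).smulRight v
  have hP0 : ∀ x, P0 x = d • x - B v x • v := fun x => by simp [P0]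
  have hP0L : ∀ x, P0 x ∈ L := by
    intro x
    rw [hL, hP0]
    simp [← hd, hSymm x v]
    ring
  let P : Λ →ₗ[ℤ] L := P0.codRestrict L hP0L
  have hP : ∀ x, (P x : Λ) = d • x - B v x • v := fun x => hP0 x
  have hLv : ∀ x : L, B (x : Λ) v = 0 := fun x => (hL x).1 x.2
  have hvL : ∀ x : L, B v (x : Λ) = 0 := fun x => by rw [hSymm]; exact hLv x
  have key : ∀ x : Λ, ∃ w : Λ, d • w = (g (P x) : Λ) + (ε * B v x) • v := by
    intro x
    obtain ⟨z, hz⟩ := hdisc ((1 / d : ℚ) ⊗ₜ[ℤ] P x) (by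
      intro l
      refine ⟨B x l, ?_⟩
      have hd' : (d : ℚ) ≠ 0 := by exact_mod_cast hd0
      have : B (P x : Λ) (l : Λ) = d * B x l := by
        rw [hP]; simp [hvL]
      rw [LinearMap.BilinForm.baseChange_tmul]
      have this2 : (B.domRestrict₁₂ L L) (P x) l = d * B x l := this
      rw [this2]
      simp
      field_simp)
    have hz' : g (P x) - ε • P x = d • z := by
      apply hinj
      have hd' : (d : ℚ) ≠ 0 := by exact_mod_cast hd0
      have h3 := congrArg (fun t => (d : ℚ) • t) hz
      simp only [LinearMap.baseChange_tmul, smul_sub, TensorProduct.smul_tmul', smul_eq_mul] at h3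
      rw [TensorProduct.tmul_sub, ← TensorProduct.smul_tmul, ← TensorProduct.smul_tmul]
      simp only [zsmul_eq_mul, mul_one]
      rw [mul_one] at h3
      rw [← h3]
      congr 2 <;> field_simp
    have hz2 := congrArg (fun t : L => (t : Λ)) hz'
    simp only [Submodule.coe_sub, Submodule.coe_smul, hP] at hz2
    refine ⟨ε • x + (z : Λ), ?_⟩
    rw [smul_add, ← hz2]
    module
  choose f hf using key
  let gt : Λ →ₗ[ℤ] Λ :=
    { toFun := f
      map_add' := by
        intro x y
        apply htf _ _ d hd0
        rw [smul_add, hf, hf, hf]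
        simp only [map_add, Submodule.coe_add]
        module
      map_smul' := by
        intro c x
        apply htf _ _ d hd0
        rw [smul_comm, hf, hf]
        simp only [map_smul, Submodule.coe_smul, RingHom.id_apply, smul_eq_mul]
        module }
  have hgt : ∀ x, d • gt x = (g (P x) : Λ) + (ε * B v x) • v := hf
  have hPL : ∀ x : L, P x = d • x := fun x => Subtype.ext (by
    rw [hP, hvL]; simp)
  have hPv : P v = 0 := Subtype.ext (by rw [hP, ← hd]; simp)
  have h1 : ∀ x : L, gt (x : Λ) = ((g x : L) : Λ) := by
    intro x
    apply htf _ _ d hd0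
    rw [hgt, hPL, hvL]
    simp
  have h2 : gt v = ε • v := by
    apply htf _ _ d hd0
    rw [hgt, hPv, ← hd]
    simp [mul_comm ε d, mul_smul]
  have hdec : ∀ x : Λ, d • x = (P x : Λ) + B v x • v := fun x => by rw [hP]; simp
  have h3 : ∀ x y : Λ, B (gt x) (gt y) = B x y := by
    intro x y
    have e : d * (d * B (gt x) (gt y)) = d * (d * B x y) := by
      have e1 : B (d • gt x) (d • gt y) = d * (d * B (gt x) (gt y)) := by simp
      have e2 : B (d • x) (d • y) = d * (d * B x y) := by simp
      rw [← e1, ← e2, hgt, hgt, hdec x, hdec y]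
      simp only [map_add, map_smul, LinearMap.add_apply, LinearMap.smul_apply, smul_eq_mul,
        hgisom, hLv, hvL, ← hd]
      linear_combination (B v x * B v y * d) * hεε
    exact mul_left_cancel₀ hd0 (mul_left_cancel₀ hd0 e)
  refine ⟨gt, ⟨⟨?_, ?_⟩, h3, h1, h2⟩, ?_⟩
  · intro x y hxy
    rw [← sub_eq_zero]
    apply hNondeg
    intro w
    rw [← h3, map_sub, hxy]
    simp
  · intro y
    obtain ⟨w, hw⟩ := hUnimod.2 ((B y).comp gt)
    have hw' : ∀ x, B w x = B y (gt x) := fun x => LinearMap.congr_fun hw x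
    refine ⟨w, ?_⟩
    rw [← sub_eq_zero]
    apply hNondeg
    intro z
    obtain ⟨l, hl⟩ := hgbij.2 (P z)
    have hz : d • z = gt ((l : Λ) + (ε * B v z) • v) := by
      rw [map_add, map_smul, h1, h2, hl, hdec z, smul_smul]
      congr 2
      linear_combination (-B v z) * hεε
    have h0 : d * B (gt w - y) z = 0 := by
      have : d * B (gt w - y) z = B (gt w - y) (d • z) := by simp
      rw [this, hz, map_sub, LinearMap.sub_apply, h3, hw', sub_self]
    exact (mul_eq_zero.1 h0).resolve_left hd0
  · rintro g' ⟨-, -, h1', h2'⟩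
    ext x
    apply htf _ _ d hd0
    rw [← map_smul, ← map_smul, hdec x]
    simp only [map_add, map_smul, h1, h1', h2, h2']
end

section
/- Let (L,B) be an even lattice and e ∈ L a nonzero element with e² = 0 whose divisibility div(e) equals m > 0. Then there exists f ∈ L with f² = 0 and B(e,f) = m²; in particular e and f span a rank-2 sublattice of L with Gram matrix ((0, m²),(m², 0)), i.e. a copy of the twisted hyperbolic plane U(m²). -/
/-- Let `(L,B)` be an even lattice and `e ∈ L` a nonzero isotropic element of
divisibility `m > 0`. Then there is `f ∈ L` with `f² = 0` and `B(e,f) = m²`, so that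
`e` and `f` span a copy of the twisted hyperbolic plane `U(m²)`. -/
theorem isotropic_class_gives_twisted_hyperbolic_plane
    {L : Type*} [AddCommGroup L] [Module.Free ℤ L] [Module.Finite ℤ L]
    (B : LinearMap.BilinForm ℤ L)
    (hSymm : ∀ x y : L, B x y = B y x)
    (hEven : ∀ x : L, 2 ∣ B x x)
    (e : L) (hene : e ≠ 0) (hiso : B e e = 0)
    (m : ℤ) (hm : 0 < m)
    (hdvd : ∀ y : L, m ∣ B e y) (hgen : ∃ y : L, B e y = m) :
    ∃ f : L, B f f = 0 ∧ B e f = m ^ 2 ∧ B f e = m ^ 2 ∧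
      LinearIndependent ℤ ![e, f] := by
  obtain ⟨y, hy⟩ := hgen
  obtain ⟨k, hk⟩ := hEven y
  have hye : B y e = m := by rw [hSymm, hy]
  have hff : B (m • y - k • e) (m • y - k • e) = 0 := by
    simp only [map_sub, map_smul, LinearMap.sub_apply, LinearMap.smul_apply, smul_eq_mul,
      hy, hye, hk, hiso]
    ring
  have hef : B e (m • y - k • e) = m ^ 2 := by
    simp only [map_sub, map_smul, smul_eq_mul, hy, hiso]
    ring
  have hm2 : m ^ 2 ≠ 0 := by positivity
  refine ⟨m • y - k • e, hff, hef, by rw [hSymm, hef], ?_⟩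
  generalize m • y - k • e = f at hff hef
  rw [LinearIndependent.pair_iff]
  intro a b hab
  have h1 : B e (a • e + b • f) = 0 := by rw [hab, map_zero]
  have h2 : B f (a • e + b • f) = 0 := by rw [hab, map_zero]
  rw [map_add, map_smul, map_smul, smul_eq_mul, smul_eq_mul, hiso, hef] at h1
  rw [map_add, map_smul, map_smul, smul_eq_mul, smul_eq_mul, hff, hSymm f e, hef] at h2
  constructor
  · simpa [hm.ne'] using h2
  · simpa [hm.ne'] using h1
end

section
/- Let (N,B) be an even nondegenerate lattice, D ∈ N a primitive element, and let r ≥ 1 and c be integers. Assume that for every nonzero L ∈ N, the product r·div(L) divides 2c·B(D,L). Then r divides c·D². -/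
theorem exists_div_aux {N : Type*} [AddCommGroup N] (f : N →ₗ[ℤ] ℤ) :
    ∃ m : ℤ, 0 ≤ m ∧ (∀ y : N, m ∣ f y) ∧ ∃ y : N, f y = m := by
  obtain ⟨g, hg⟩ := (IsPrincipalIdealRing.principal (LinearMap.range f : Ideal ℤ)).principal
  have h1 : ∀ y, g ∣ f y := fun y => by
    have : f y ∈ LinearMap.range f := ⟨y, rfl⟩
    rw [hg] at this
    exact Ideal.mem_span_singleton.mp this
  have h2 : g ∈ LinearMap.range f := by
    rw [hg]; exact Submodule.mem_span_singleton_self g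
  obtain ⟨y, hy⟩ := h2
  refine ⟨|g|, abs_nonneg g, fun y => (abs_dvd _ _).mpr (h1 y), ?_⟩
  rcases abs_choice g with h | h
  · exact ⟨y, by rw [h, hy]⟩
  · exact ⟨-y, by rw [h, map_neg, hy]⟩

/-- Let `(N,B)` be an even nondegenerate lattice, `D ∈ N` primitive, `r ≥ 1` and `c`
integers. If for every nonzero `L ∈ N` the product `r·div(L)` divides `2c·B(D,L)`
(the paper's condition (∗)), then `r` divides `c·D²`. Here `div(L)` is the nonnegative
generator of the ideal `{B(L,y) : y ∈ N}`. -/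
theorem condition_star_implies_r_divides_cDsq
    {N : Type*} [AddCommGroup N] [Module.Free ℤ N] [Module.Finite ℤ N]
    (B : LinearMap.BilinForm ℤ N)
    (hSymm : ∀ x y : N, B x y = B y x)
    (hEven : ∀ x : N, 2 ∣ B x x)
    (hNondeg : ∀ x : N, (∀ y : N, B x y = 0) → x = 0)
    (D : N) (hDprim : ∀ (k : ℤ) (y : N), D = k • y → k = 1 ∨ k = -1)
    (r c : ℤ) (hr : 1 ≤ r)
    (hstar : ∀ (L : N), L ≠ 0 → ∀ m : ℤ, 0 ≤ m →
      (∀ y : N, m ∣ B L y) → (∃ y : N, B L y = m) →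
      (r * m) ∣ 2 * c * B D L) :
    r ∣ c * B D D := by
  by_cases hD0 : D = 0
  · simp [hD0]
  obtain ⟨d, hd0, hd, y, hy⟩ := exists_div_aux (B D)
  rcases Int.even_or_odd d with he | ho
  · have h := hstar D hD0 d hd0 hd ⟨y, hy⟩
    obtain ⟨e, rfl⟩ := he.two_dvd
    obtain ⟨k, hk⟩ := h
    exact ⟨e * k, by linarith⟩
  · have hy0 : y ≠ 0 := by
      rintro rfl
      rw [map_zero] at hy
      subst hy
      simp at ho
    obtain ⟨m, hm0, hm, hz⟩ := exists_div_aux (B y)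
    have h := (dvd_mul_right r m).trans (hstar y hy0 m hm0 hm hz)
    rw [hy] at h
    have h2 : 2 * d ∣ B D D :=
      (Int.isCoprime_two_left.mpr ho).mul_dvd (hEven D) (hd D)
    obtain ⟨k, hk⟩ := h2
    rw [hk]
    exact h.trans ⟨k, by ring⟩
end

section
/- Let (Λ,B) be an even unimodular nondegenerate lattice, N ⊆ Λ a primitive sublattice on which B is nondegenerate, and D ∈ N a primitive element. Let r ≥ 1, c, s be integers with gcd(r,c,s) = 1, and in the Mukai lattice Λ̃ = ℤ ⊕ Λ ⊕ ℤ set v = (r, cD, s); assume v² = c²·D² − 2rs ≥ 2. Then the following are equivalent: (i) r divides c²·D², the element e = (r, cD, c²D²/r − s) of Λ̃ is primitive, and for every w ∈ Λ̃ with ⟨w,v⟩ = 0 the integer v²/2 divides ⟨w,e⟩; (ii) for every nonzero L ∈ N the product r·div_N(L) divides 2c·B(D,L), and gcd(r,s) ∈ {1,2}. -/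
/-- The Mukai pairing on `ℤ ⊕ Λ ⊕ ℤ`: `⟨(a,x,b),(a',x',b')⟩ = B(x,x') − ab' − a'b`. -/
def mukaiPair {Λ : Type*} [AddCommGroup Λ] (B : LinearMap.BilinForm ℤ Λ)
    (w w' : ℤ × Λ × ℤ) : ℤ :=
  B w.2.1 w'.2.1 - w.1 * w'.2.2 - w'.1 * w.2.2

lemma aux_dual {Λ : Type*} [AddCommGroup Λ] [Module.Free ℤ Λ] [Module.Finite ℤ Λ]
    (D : Λ) (hDprim : ∀ (k : ℤ) (y : Λ), D = k • y → k = 1 ∨ k = -1) :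
    ∃ f : Λ →ₗ[ℤ] ℤ, f D = 1 := by
  classical
  let I : Ideal ℤ := LinearMap.range (LinearMap.applyₗ D : (Λ →ₗ[ℤ] ℤ) →ₗ[ℤ] ℤ)
  obtain ⟨g, hg⟩ := (IsPrincipalIdealRing.principal I).principal
  have hdiv : ∀ f : Λ →ₗ[ℤ] ℤ, g ∣ f D := by
    intro f
    have h : f D ∈ I := ⟨f, rfl⟩
    rw [hg] at h
    exact Ideal.mem_span_singleton.1 h
  have hgI : g ∈ I := by
    rw [hg]; exact Ideal.mem_span_singleton_self g
  obtain ⟨f, hf⟩ := hgI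
  have hf' : f D = g := hf
  let b := Module.Free.chooseBasis ℤ Λ
  have hc : ∀ i, ∃ z, b.repr D i = g * z := fun i => hdiv (b.coord i)
  choose z hz using hc
  have hD : D = g • ∑ i, z i • b i := by
    conv_lhs => rw [← b.sum_repr D]
    rw [Finset.smul_sum]
    exact Finset.sum_congr rfl fun i _ => by rw [hz, mul_smul]
  rcases hDprim _ _ hD with h | h
  · exact ⟨f, by rw [hf', h]⟩
  · exact ⟨-f, by rw [LinearMap.neg_apply, hf', h]; rfl⟩

lemma aux_nondeg {M : Type*} [AddCommGroup M] [Module.Free ℤ M] [Module.Finite ℤ M]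
    (B : LinearMap.BilinForm ℤ M) (hSymm : ∀ x y, B x y = B y x)
    (hN : ∀ x, (∀ y, B x y = 0) → x = 0) (f : M →ₗ[ℤ] ℤ) :
    ∃ (k : ℤ) (L : M), k ≠ 0 ∧ ∀ z, B L z = k * f z := by
  classical
  let b := Module.Free.chooseBasis ℤ M
  let A := LinearMap.BilinForm.toMatrix b B
  have hdet : A.det ≠ 0 := by
    apply (LinearMap.BilinForm.nondegenerate_iff_det_ne_zero b).1
    refine ⟨hN, fun y h => hN y fun x => ?_⟩
    rw [hSymm]; exact h x
  let w := Matrix.vecMul (fun i => f (b i)) A.adjugate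
  refine ⟨A.det, ∑ i, w i • b i, hdet, ?_⟩
  have key : B (∑ i, w i • b i) = A.det • f := by
    apply b.ext
    intro j
    have h1 : B (∑ i, w i • b i) (b j) = Matrix.vecMul w A j := by
      simp [Matrix.vecMul, dotProduct, A, LinearMap.BilinForm.toMatrix_apply]
    rw [h1]
    simp only [w]
    rw [Matrix.vecMul_vecMul, Matrix.adjugate_mul, Matrix.vecMul_smul, Matrix.vecMul_one]
    simp
  intro z
  rw [key]; simp

/-- Markman's numerical criterion for the reflection `R_e` to be a monodromy operator
acting as `−Id` on the discriminant group, rephrased: condition (i) (integrality and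
primitivity of `e = (r, cD, c²D²/r − s)` together with `(v²/2) ∣ ⟨w,e⟩` for all
`w ⊥ v`) is equivalent to the paper's condition (∗) together with `gcd(r,s) ∈ {1,2}`. -/
theorem reflection_monodromy_criterion_iff_condition_star
    {Λ : Type*} [AddCommGroup Λ] [Module.Free ℤ Λ] [Module.Finite ℤ Λ]
    (B : LinearMap.BilinForm ℤ Λ)
    (hSymm : ∀ x y : Λ, B x y = B y x)
    (hEven : ∀ x : Λ, 2 ∣ B x x)
    (hNondeg : ∀ x : Λ, (∀ y : Λ, B x y = 0) → x = 0)
    (hUnimod : Function.Bijective fun x : Λ => (B x : Λ →ₗ[ℤ] ℤ))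
    (N : Submodule ℤ Λ)
    (hNprim : ∀ (k : ℤ) (x : Λ), k ≠ 0 → k • x ∈ N → x ∈ N)
    (hNnondeg : ∀ x ∈ N, (∀ y ∈ N, B x y = 0) → x = 0)
    (D : Λ) (hDN : D ∈ N)
    (hDprim : ∀ (k : ℤ) (y : Λ), D = k • y → k = 1 ∨ k = -1)
    (r c s : ℤ) (hr : 1 ≤ r)
    (hgcd : Int.gcd (Int.gcd r c : ℤ) s = 1)
    (hv2 : 2 ≤ mukaiPair B (r, c • D, s) (r, c • D, s)) :
    (r ∣ c ^ 2 * B D D ∧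
      (∀ (k : ℤ) (w : ℤ × Λ × ℤ), (r, c • D, c ^ 2 * B D D / r - s) = k • w →
        k = 1 ∨ k = -1) ∧
      (∀ w : ℤ × Λ × ℤ, mukaiPair B w (r, c • D, s) = 0 →
        (mukaiPair B (r, c • D, s) (r, c • D, s) / 2) ∣
          mukaiPair B w (r, c • D, c ^ 2 * B D D / r - s)))
    ↔
    ((∀ L ∈ N, L ≠ 0 → ∀ m : ℤ, 0 ≤ m →
        (∀ y ∈ N, m ∣ B L y) → (∃ y ∈ N, B L y = m) →
        (r * m) ∣ 2 * c * B D L) ∧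
      (Int.gcd r s = 1 ∨ Int.gcd r s = 2)) := by
  obtain ⟨f, hf⟩ := aux_dual D hDprim
  obtain ⟨y, hy⟩ := hUnimod.2 f
  have hyD : B y D = 1 := by
    have : B y = f := hy
    rw [this, hf]
  obtain ⟨d, hd⟩ := hEven D
  have hr0 : r ≠ 0 := by omega
  have hbez0 : (Int.gcd r c : ℤ) = r * Int.gcdA r c + c * Int.gcdB r c := Int.gcd_eq_gcd_ab r c
  obtain ⟨α, β, γ, hbez⟩ : ∃ α β γ : ℤ, r * α + c * β + s * γ = 1 := by
    have h2 := Int.gcd_eq_gcd_ab (Int.gcd r c : ℤ) s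
    rw [hgcd] at h2
    refine ⟨Int.gcdA r c * Int.gcdA (Int.gcd r c : ℤ) s,
      Int.gcdB r c * Int.gcdA (Int.gcd r c : ℤ) s, Int.gcdB (Int.gcd r c : ℤ) s, ?_⟩
    rw [hbez0] at h2
    push_cast at h2
    rw [← hbez0] at h2
    rw [h2, hbez0]
    ring
  have hvv : mukaiPair B (r, c • D, s) (r, c • D, s) = c ^ 2 * B D D - 2 * r * s := by
    simp [mukaiPair]; ring
  trans r ∣ 2 * c
  · constructor
    · rintro ⟨⟨t, ht⟩, -, h⟩
      have hdivt : c ^ 2 * B D D / r = t := by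
        rw [ht, Int.mul_ediv_cancel_left _ hr0]
      rw [hdivt, hvv] at h
      rw [hvv] at hv2
      have hw := h ((Int.gcd r c : ℤ), (s * Int.gcdB r c) • y, -(s * Int.gcdA r c)) (by
        simp only [mukaiPair, map_smul, LinearMap.smul_apply, hyD, smul_eq_mul]
        rw [hbez0]; ring)
      have hpe : mukaiPair B ((Int.gcd r c : ℤ), (s * Int.gcdB r c) • y, -(s * Int.gcdA r c))
          (r, c • D, t - s) = -((Int.gcd r c : ℤ) * (t - 2 * s)) := by
        simp only [mukaiPair, map_smul, LinearMap.smul_apply, hyD, smul_eq_mul]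
        rw [hbez0]; ring
      rw [hpe, dvd_neg] at hw
      obtain ⟨j, hj⟩ := hw
      have h2 : 2 ∣ c ^ 2 * B D D - 2 * r * s := ⟨c ^ 2 * d - r * s, by rw [hd]; ring⟩
      have hM := Int.mul_ediv_cancel' h2
      have hu : (t - 2 * s) ≠ 0 := by
        intro h0
        have : c ^ 2 * B D D - 2 * r * s = r * (t - 2 * s) := by rw [ht]; ring
        rw [this, h0] at hv2
        omega
      have : r ∣ 2 * (Int.gcd r c : ℤ) := by
        refine ⟨j, mul_right_cancel₀ hu ?_⟩
        linear_combination 2 * hj + j * hM + j * ht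
      exact this.trans (mul_dvd_mul_left 2 (Int.gcd_dvd_right _ _))
    · rintro ⟨q, hq⟩
      have ht : c ^ 2 * B D D = r * (q * c * d) := by
        rw [hd]; linear_combination c * d * hq
      have hdivt : c ^ 2 * B D D / r = q * c * d := by
        rw [ht, Int.mul_ediv_cancel_left _ hr0]
      refine ⟨⟨_, ht⟩, ?_, ?_⟩
      · rintro k ⟨a, x, b⟩ h
        rw [hdivt] at h
        simp only [Prod.smul_mk, Prod.mk.injEq, smul_eq_mul] at h
        obtain ⟨h1, h2, h3⟩ := h
        have hc : c = k * B y x := by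
          have := congrArg (B y) h2
          simpa [hyD] using this
        have hk : k ∣ 1 := by
          refine ⟨a * α + B y x * β + (q * B y x * d - b) * γ, ?_⟩
          linear_combination -hbez + α * h1 + (β + q * d * γ) * hc - γ * h3
        exact Int.isUnit_iff.1 (isUnit_of_dvd_one hk)
      · rintro ⟨a, x, b⟩ h
        rw [hdivt, hvv]
        simp only [mukaiPair, map_smul, smul_eq_mul] at h ⊢
        have h2 : c ^ 2 * B D D - 2 * r * s = 2 * (c ^ 2 * d - r * s) := by rw [hd]; ring
        rw [h2, Int.mul_ediv_cancel_left _ two_ne_zero]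
        have h2a : 2 * a = r * (2 * a * α + q * a * β + (q * B x D - 2 * b) * γ) := by
          linear_combination (-2 * a) * hbez + (a * β + γ * B x D) * hq - 2 * γ * h
        refine ⟨-(2 * a * α + q * a * β + (q * B x D - 2 * b) * γ), ?_⟩
        apply mul_left_cancel₀ (two_ne_zero (α := ℤ))
        rw [hd] at ht
        linear_combination 2 * h - (q * c * d - 2 * s) * h2a + (2 * a * α + q * a * β + (q * B x D - 2 * b) * γ) * ht
  · constructor
    · rintro ⟨q, hq⟩
      constructor
      · intro L _ _ m _ hm _
        rw [hSymm D L]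
        exact mul_dvd_mul ⟨q, hq⟩ (hm D hDN)
      · have h : (Int.gcd r s : ℤ) ∣ 2 := by
          obtain ⟨r', hr'⟩ := Int.gcd_dvd_left r s
          obtain ⟨s', hs'⟩ := Int.gcd_dvd_right r s
          refine ⟨2 * r' * α + r' * q * β + 2 * s' * γ, ?_⟩
          linear_combination -2 * hbez + β * hq + (2 * α + q * β) * hr' + 2 * γ * hs'
        have h' : Int.gcd r s ∣ 2 := by exact_mod_cast h
        exact (Nat.dvd_prime Nat.prime_two).1 h'
    · rintro ⟨h, -⟩
      obtain ⟨k, L, hk, hL⟩ := aux_nondeg (B.restrict N) (fun x y => hSymm x y)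
        (fun x hx => Subtype.ext (hNnondeg x x.2 fun y hy => hx ⟨y, hy⟩)) ((B y).comp N.subtype)
      have hL' : ∀ z ∈ N, B L z = k * B y z := fun z hz => hL ⟨z, hz⟩
      have hLD : B L D = k := by rw [hL' D hDN, hyD, mul_one]
      have := h L L.2 (by intro h0; rw [h0] at hLD; simp at hLD; exact hk hLD.symm) |k| (abs_nonneg k)
        (fun z hz => by rw [hL' z hz, abs_dvd]; exact dvd_mul_right _ _)
        (by
          rcases abs_choice k with h1 | h1
          · exact ⟨D, hDN, by rw [hLD, h1]⟩
          · exact ⟨-D, N.neg_mem hDN, by rw [map_neg, hLD, h1]⟩)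
      rw [hSymm D L, hLD] at this
      have h3 : r * k ∣ 2 * c * k := (mul_dvd_mul_left r (self_dvd_abs k)).trans this
      exact Int.dvd_of_mul_dvd_mul_right hk h3
end

section
/- Fix an integer d ≥ 1 and equip ℤ³ with the Mukai pairing ⟨(r₁,c₁,s₁),(r₂,c₂,s₂)⟩ = 2d·c₁c₂ − r₁s₂ − r₂s₁. Let r ≥ 1, c, s be integers with gcd(r,c,s) = 1, set v = (r,c,s), and assume v² = 2dc² − 2rs ≥ 2, r | 2c and gcd(r,s) ∈ {1,2}. Then there exists w ∈ H_v with either (w² = 0 and ⟨w,v⟩ ∈ {1,2}) or (w² = −2 and ⟨w,v⟩ = 0) if and only if at least one of the following holds: (a) r = 1 or r = 2; (b) there exist k ∈ ℤ and m ∈ {1,2} with c = kr and s = dk²r − m; (c) d is even and there exist an integer a ≥ 2 and an odd integer m with r = 2a, c = ma and s = (d/2)m²a − 1; (d) d is odd and there exist an odd integer a ≥ 3 and an odd integer m with r = 2a, c = ma and 2s = dm²a − 1. -/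
/-- The Mukai pairing on `ℤ³` for a K3 surface of degree `2d`:
`⟨(r₁,c₁,s₁),(r₂,c₂,s₂)⟩ = 2d·c₁c₂ − r₁s₂ − r₂s₁`. -/
def mk3 (d : ℤ) (v w : ℤ × ℤ × ℤ) : ℤ :=
  2 * d * v.2.1 * w.2.1 - v.1 * w.2.2 - w.1 * v.2.2

/-- Classification of divisorial vertical walls (Picard rank one): under condition (∗),
the vertical-wall lattice `H_v` contains an isotropic class pairing to `1` or `2` with
`v`, or a spherical class orthogonal to `v`, if and only if `v` belongs to one of the
explicit series (a)–(d). -/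
theorem vertical_wall_divisorial_classification
    (d : ℤ) (hd : 1 ≤ d) (r c s : ℤ) (hr : 1 ≤ r)
    (hgcd : Int.gcd (Int.gcd r c : ℤ) s = 1)
    (hv2 : 2 ≤ mk3 d (r, c, s) (r, c, s))
    (hr2c : r ∣ 2 * c)
    (hrs : Int.gcd r s = 1 ∨ Int.gcd r s = 2) :
    (∃ w : ℤ × ℤ × ℤ, c * w.1 = r * w.2.1 ∧
      ((mk3 d w w = 0 ∧ (mk3 d w (r, c, s) = 1 ∨ mk3 d w (r, c, s) = 2)) ∨
        (mk3 d w w = -2 ∧ mk3 d w (r, c, s) = 0)))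
    ↔
    ((r = 1 ∨ r = 2) ∨
      (∃ k m : ℤ, (m = 1 ∨ m = 2) ∧ c = k * r ∧ s = d * k ^ 2 * r - m) ∨
      (Even d ∧ ∃ a m : ℤ, 2 ≤ a ∧ Odd m ∧ r = 2 * a ∧ c = m * a ∧
        2 * s = d * m ^ 2 * a - 2) ∨
      (Odd d ∧ ∃ a m : ℤ, 3 ≤ a ∧ Odd a ∧ Odd m ∧ r = 2 * a ∧ c = m * a ∧
        2 * s = d * m ^ 2 * a - 1)) := by
  have hco : ∀ x : ℤ, x ∣ r → x ∣ c → x ∣ s → x ∣ 1 := by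
    intro x h1 h2 h3
    have := Int.dvd_coe_gcd (Int.dvd_coe_gcd h1 h2) h3
    rw [hgcd] at this
    exact_mod_cast this
  have hprod : ∀ l N : ℤ, 1 ≤ N → (l * N = 1 ∨ l * N = 2) →
      (l = 1 ∧ N = 1) ∨ (l = 1 ∧ N = 2) ∨ (l = 2 ∧ N = 1) := by
    intro l N hN h
    have h1 : 1 ≤ l := by
      by_contra hl
      have : l * N ≤ 0 := by nlinarith
      omega
    have h0 : l * N ≤ 2 := by omega
    have h2 : l ≤ 2 := by nlinarith
    have h3 : N ≤ 2 := by nlinarith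
    interval_cases l <;> interval_cases N <;> simp_all
  simp only [mk3] at *
  constructor
  · rintro ⟨⟨x, y, z⟩, hw, h⟩
    simp only at hw h
    by_cases hrc : r ∣ c
    · obtain ⟨k, rfl⟩ := hrc
      have hy : y = k * x := by
        have : r * (y - k * x) = 0 := by linarith
        rcases mul_eq_zero.mp this with h0 | h0 <;> linarith
      subst hy
      obtain ⟨n, hn⟩ : ∃ n, n = d * k ^ 2 * r - s := ⟨_, rfl⟩
      obtain ⟨u, hu⟩ : ∃ u, u = z - d * k ^ 2 * x := ⟨_, rfl⟩
      obtain rfl : s = d * k ^ 2 * r - n := by linarith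
      obtain rfl : z = u + d * k ^ 2 * x := by linarith
      have hn1 : 1 ≤ n := by
        by_contra hl
        have : r * n ≤ 0 := by nlinarith
        nlinarith
      have hp : 2 * d * (k * x) * (r * k) - x * (d * k ^ 2 * r - n) - r * (u + d * k ^ 2 * x)
        = x * n - r * u := by ring
      have hq : 2 * d * (k * x) * (k * x) - x * (u + d * k ^ 2 * x) - x * (u + d * k ^ 2 * x)
        = - 2 * (x * u) := by ring
      rw [hp, hq] at h
      rcases h with ⟨h0, h1⟩ | ⟨h0, h1⟩
      · have h0 : x * u = 0 := by linarith
        rcases mul_eq_zero.mp h0 with rfl | rfl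
        · left
          have := hprod (-u) r hr (by
            rcases h1 with h1 | h1
            · left; linarith
            · right; linarith)
          omega
        · right; left
          have := hprod x n hn1 (by simpa using h1)
          exact ⟨k, n, by omega, by ring, rfl⟩
      · have h0 : x * u = 1 := by linarith
        have hnr : n = r := by
          rcases Int.mul_eq_one_iff_eq_one_or_neg_one.mp h0 with ⟨rfl, rfl⟩ | ⟨rfl, rfl⟩ <;> linarith
        subst hnr
        have := hco n dvd_rfl (dvd_mul_right _ _) ⟨d * k ^ 2 - 1, by ring⟩
        left; left
        exact Int.eq_one_of_dvd_one (by omega) this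
    · obtain ⟨m, hm⟩ := hr2c
      have hmo : Odd m := by
        by_contra hme
        rw [Int.not_odd_iff_even] at hme
        obtain ⟨j, rfl⟩ := hme
        exact hrc ⟨j, by linarith⟩
      obtain ⟨a, rfl⟩ : ∃ a, r = 2 * a := by
        have : Even (r * m) := ⟨c, by linarith⟩
        rcases Int.even_mul.mp this with h1 | h1
        · obtain ⟨a, ha⟩ := h1
          exact ⟨a, by linarith⟩
        · exact absurd hmo (Int.not_odd_iff_even.mpr h1)
      obtain rfl : c = m * a := by linarith
      have ha : 1 ≤ a := by omega
      have hxy : m * x = 2 * y := by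
        have : a * (m * x - 2 * y) = 0 := by linarith
        rcases mul_eq_zero.mp this with h0 | h0 <;> linarith
      obtain ⟨l, rfl⟩ : ∃ l, x = 2 * l := by
        have : Even (m * x) := ⟨y, by linarith⟩
        rcases Int.even_mul.mp this with h1 | h1
        · exact absurd hmo (Int.not_odd_iff_even.mpr h1)
        · obtain ⟨a, ha⟩ := h1
          exact ⟨a, by linarith⟩
      obtain rfl : y = m * l := by linarith
      obtain ⟨N, hN⟩ : ∃ N, N = d * m ^ 2 * a - 2 * s := ⟨_, rfl⟩
      obtain ⟨X, hX⟩ : ∃ X, X = d * m ^ 2 * l - 2 * z := ⟨_, rfl⟩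
      have hN1 : 1 ≤ N := by
        by_contra hl
        have : a * N ≤ 0 := by nlinarith
        rw [hN] at this
        nlinarith
      have hp : 2 * d * (m * l) * (m * a) - 2 * l * s - 2 * a * z = a * X + l * N := by
        rw [hN, hX]; ring
      have hq : 2 * d * (m * l) * (m * l) - 2 * l * z - 2 * l * z = 2 * (l * X) := by
        rw [hX]; ring
      rw [hp, hq] at h
      have hm2 : Odd (m ^ 2) := hmo.pow
      rcases h with ⟨h0, h1⟩ | ⟨h0, h1⟩
      · have h0 : l * X = 0 := by linarith
        rcases mul_eq_zero.mp h0 with rfl | rfl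
        · left; right
          have := hprod (-(2 * z)) a ha (by
            have e : -(2 * z) * a = a * X + 0 * N := by rw [hX]; ring
            rwa [e])
          omega
        · by_cases ha1 : a = 1
          · left; right; omega
          right; right
          have := hprod l N hN1 (by simpa using h1)
          rcases this with ⟨rfl, rfl⟩ | ⟨rfl, rfl⟩ | ⟨rfl, rfl⟩
          · exfalso
            have e1 : Even (d * m ^ 2) := ⟨z, by linarith⟩
            have e2 : Even (d * m ^ 2 * a) := e1.mul_right a
            obtain ⟨j, hj⟩ := e2
            omega
          · left
            have e1 : Even (d * m ^ 2) := ⟨z, by linarith⟩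
            refine ⟨?_, a, m, by omega, hmo, rfl, rfl, by linarith⟩
            rcases Int.even_mul.mp e1 with h | h
            · exact h
            · exact absurd hm2 (Int.not_odd_iff_even.mpr h)
          · right
            have e : Odd (d * m ^ 2 * a) := ⟨s, by linarith⟩
            have e1 := Int.odd_mul.mp e
            obtain ⟨e2, e3⟩ := e1
            have e4 := (Int.odd_mul.mp e2).1
            refine ⟨e4, a, m, ?_, e3, hmo, rfl, rfl, by linarith⟩
            obtain ⟨j, hj⟩ := e3
            omega
      · have h0 : l * (-X) = 1 := by linarith
        left; right
        have hl := Int.mul_eq_one_iff_eq_one_or_neg_one.mp h0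
        have haN : N = a := by
          rcases hl with ⟨h2, h3⟩ | ⟨h2, h3⟩
          · obtain rfl : X = -1 := by linarith
            subst h2; linarith
          · obtain rfl : X = 1 := by linarith
            subst h2; linarith
        have hdm : Odd (d * m ^ 2) := by
          rcases hl with ⟨h2, h3⟩ | ⟨h2, h3⟩
          · subst h2; exact ⟨z - 1, by linarith⟩
          · subst h2; exact ⟨-z - 1, by linarith⟩
        obtain ⟨j, hj⟩ := hdm
        have hs : s = a * j := by
          rw [hj] at hN
          linarith
        have := hco a (dvd_mul_left _ _) (dvd_mul_left _ _) ⟨j, hs⟩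
        have := Int.eq_one_of_dvd_one (by omega) this
        omega
  · rintro (h | ⟨k, m, hm, rfl, rfl⟩ | ⟨⟨e, rfl⟩, a, m, ha, hm, rfl, rfl, hs⟩ |
      ⟨hd, a, m, ha, hao, hm, rfl, rfl, hs⟩)
    · exact ⟨(0, 0, -1), by simp, Or.inl ⟨by simp, by simpa using h⟩⟩
    · refine ⟨(1, k, d * k ^ 2), by simp only; ring, Or.inl ⟨by simp only; ring, ?_⟩⟩
      have e : 2 * d * k * (k * r) - 1 * (d * k ^ 2 * r - m) - r * (d * k ^ 2) = m := by ring
      simpa only [e] using hm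
    · refine ⟨(2, m, e * m ^ 2), by simp only; ring, Or.inl ⟨by simp only; ring, Or.inr ?_⟩⟩
      simp only
      linear_combination -hs
    · refine ⟨(4, 2 * m, d * m ^ 2), by simp only; ring, Or.inl ⟨by simp only; ring, Or.inr ?_⟩⟩
      simp only
      linear_combination -2 * hs
end

section
/- Fix an integer d ≥ 1 and equip ℤ³ with the Mukai pairing ⟨(r₁,c₁,s₁),(r₂,c₂,s₂)⟩ = 2d·c₁c₂ − r₁s₂ − r₂s₁. Let r ≥ 1, k, s be integers with gcd(r,s) = 1, set v = (r, kr, s), and assume v² = 2dk²r² − 2rs ≥ 2. Then there exists w ∈ ℤ³ of the form w = (λ, λk, μ) with either (w² = 0 and ⟨w,v⟩ ∈ {1,2}) or (w² = −2 and ⟨w,v⟩ = 0) if and only if r ∈ {1,2} or s = dk²r − m for some m ∈ {1,2}. -/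
theorem aux_pos_dvd (a b : ℤ) (ha : 1 ≤ a) (h : a * b = 1 ∨ a * b = 2) : a = 1 ∨ a = 2 := by
  have hb : 1 ≤ b := by
    by_contra hb
    have : b ≤ 0 := by omega
    rcases h with h | h <;> nlinarith
  have : a ≤ 2 := by rcases h with h | h <;> nlinarith
  omega

/-- Step 2 (the case `r ∣ c`) in the classification of divisorial vertical walls: for
`v = (r, kr, s)`, there exists `w = (λ, λk, μ)` which is isotropic pairing to `1` or `2`
with `v`, or spherical and orthogonal to `v`, if and only if `r ∈ {1,2}` or
`s = dk²r − m` with `m ∈ {1,2}`. -/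
theorem vertical_wall_divisorial_r_divides_c
    (d : ℤ) (hd : 1 ≤ d) (r k s : ℤ) (hr : 1 ≤ r)
    (hgcd : Int.gcd r s = 1)
    (hv2 : 2 ≤ mk3 d (r, k * r, s) (r, k * r, s)) :
    (∃ lam mu : ℤ,
      ((mk3 d (lam, lam * k, mu) (lam, lam * k, mu) = 0 ∧
          (mk3 d (lam, lam * k, mu) (r, k * r, s) = 1 ∨
            mk3 d (lam, lam * k, mu) (r, k * r, s) = 2)) ∨
        (mk3 d (lam, lam * k, mu) (lam, lam * k, mu) = -2 ∧
          mk3 d (lam, lam * k, mu) (r, k * r, s) = 0)))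
    ↔
    (r = 1 ∨ r = 2 ∨ ∃ m : ℤ, (m = 1 ∨ m = 2) ∧ s = d * k ^ 2 * r - m) := by
  have e1 : ∀ lam mu : ℤ, mk3 d (lam, lam * k, mu) (lam, lam * k, mu)
      = 2 * (lam * (d * k ^ 2 * lam - mu)) := by
    intro lam mu; simp only [mk3]; ring
  have e2 : ∀ lam mu : ℤ, mk3 d (lam, lam * k, mu) (r, k * r, s)
      = (d * k ^ 2 * r - s) * lam + r * (d * k ^ 2 * lam - mu) := by
    intro lam mu; simp only [mk3]; ring
  have e3 : mk3 d (r, k * r, s) (r, k * r, s) = 2 * (r * (d * k ^ 2 * r - s)) := by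
    simp only [mk3]; ring
  rw [e3] at hv2
  simp only [e1, e2]
  have ht : 1 ≤ d * k ^ 2 * r - s := by
    by_contra h
    have h' : d * k ^ 2 * r - s ≤ 0 := by omega
    nlinarith
  constructor
  · rintro ⟨lam, mu, ⟨h0, h⟩ | ⟨h1, h2⟩⟩
    · have h0' : lam * (d * k ^ 2 * lam - mu) = 0 := by omega
      rcases mul_eq_zero.mp h0' with hl | hn
      · have := aux_pos_dvd r (d * k ^ 2 * lam - mu) hr (by
          rw [hl] at h ⊢; simpa using h)
        tauto
      · rw [hn] at h
        have := aux_pos_dvd _ lam ht (by simpa using h)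
        exact Or.inr (Or.inr ⟨d * k ^ 2 * r - s, this, by ring⟩)
    · have h1' : lam * (d * k ^ 2 * lam - mu) = -1 := by omega
      generalize d * k ^ 2 * lam - mu = n at h1' h2
      have hts : s = r * (d * k ^ 2 - 1) := by
        rcases Int.eq_one_or_neg_one_of_mul_eq_neg_one h1' with hl | hl
        · subst hl
          have : n = -1 := by linarith
          subst this; linarith
        · subst hl
          have : n = 1 := by linarith
          subst this; linarith
      left
      have hd1 : r ∣ ((Int.gcd r s : ℕ) : ℤ) := Int.dvd_coe_gcd dvd_rfl ⟨_, hts⟩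
      rw [hgcd] at hd1
      have := Int.le_of_dvd (by norm_num) hd1
      push_cast at this
      omega
  · rintro (h | h | ⟨m, hm, h⟩)
    · exact ⟨0, -1, Or.inl ⟨by ring, Or.inl (by rw [h]; ring)⟩⟩
    · exact ⟨0, -1, Or.inl ⟨by ring, Or.inr (by rw [h]; ring)⟩⟩
    · refine ⟨1, d * k ^ 2, Or.inl ⟨by ring, ?_⟩⟩
      have : (d * k ^ 2 * r - s) * 1 + r * (d * k ^ 2 * 1 - d * k ^ 2) = m := by rw [h]; ring
      rw [this]; exact hm
end

section
/- Fix an integer d ≥ 1 and equip ℤ³ with the Mukai pairing ⟨(r₁,c₁,s₁),(r₂,c₂,s₂)⟩ = 2d·c₁c₂ − r₁s₂ − r₂s₁. Let r ≥ 1, c, s be integers with gcd(r,c,s) = 1, set v = (r,c,s), and assume v² = 2dc² − 2rs ≥ 2, r | 2c and gcd(r,s) ∈ {1,2}. Then at least one of the following holds: (divisorial case) there exists w ∈ H_v with either (w² = 0 and ⟨w,v⟩ ∈ {1,2}) or (w² = −2 and ⟨w,v⟩ = 0); or (flopping case) there exist a₁, a₂ ∈ H_v with v = a₁ + a₂, a₁²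 ≥ 0, a₂² ≥ 0, ⟨a₁,v⟩ > 0 and ⟨a₂,v⟩ > 0. -/
/-- Membership in the vertical-wall lattice `H_v = {(λ,κ,μ) : cλ = rκ}` for
`v = (r,c,s)`. -/
def memHv (r c : ℤ) (w : ℤ × ℤ × ℤ) : Prop :=
  c * w.1 = r * w.2.1

/-- The vertical wall is either divisorial or flopping: under condition (∗), either
`H_v` contains an isotropic class pairing to `1` or `2` with `v` or a spherical class
orthogonal to `v` (divisorial case), or `v` decomposes as `v = a₁ + a₂` in `H_v` with
`aᵢ² ≥ 0` and `⟨aᵢ,v⟩ > 0` (flopping case). -/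
theorem vertical_wall_divisorial_or_flopping
    (d : ℤ) (hd : 1 ≤ d) (r c s : ℤ) (hr : 1 ≤ r)
    (hgcd : Int.gcd (Int.gcd r c : ℤ) s = 1)
    (hv2 : 2 ≤ mk3 d (r, c, s) (r, c, s))
    (hr2c : r ∣ 2 * c)
    (hrs : Int.gcd r s = 1 ∨ Int.gcd r s = 2) :
    (∃ w : ℤ × ℤ × ℤ, memHv r c w ∧
      ((mk3 d w w = 0 ∧ (mk3 d w (r, c, s) = 1 ∨ mk3 d w (r, c, s) = 2)) ∨
        (mk3 d w w = -2 ∧ mk3 d w (r, c, s) = 0))) ∨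
    (∃ a₁ a₂ : ℤ × ℤ × ℤ, memHv r c a₁ ∧ memHv r c a₂ ∧
      (r, c, s) = a₁ + a₂ ∧
      0 ≤ mk3 d a₁ a₁ ∧ 0 ≤ mk3 d a₂ a₂ ∧
      0 < mk3 d a₁ (r, c, s) ∧ 0 < mk3 d a₂ (r, c, s)) := by
  obtain ⟨k, hk⟩ := hr2c
  simp only [mk3, memHv] at *
  rcases Int.even_or_odd' k with ⟨j, hj | hj⟩
  · have hc : c = r * j := by subst hj; linarith
    subst hc
    right
    have hN : 0 < d * r * j ^ 2 - s := by
      by_contra h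
      push Not at h
      nlinarith [mul_nonneg (by linarith : (0:ℤ) ≤ r) (by linarith : 0 ≤ s - d * r * j ^ 2)]
    have h1 : 0 ≤ (r - 1) * (d * r * j ^ 2 - s) := mul_nonneg (by linarith) hN.le
    refine ⟨(r - 1, r * j - j, s - d * j ^ 2), (1, j, d * j ^ 2), ?_, ?_, ?_, ?_, ?_, ?_, ?_⟩
    · simp only; ring
    · simp only; ring
    · simp
    · simp only; nlinarith
    · simp only; nlinarith
    · simp only; nlinarith
    · simp only; nlinarith
  · have hre : Even r := by
      have h : Even (r * k) := hk ▸ even_two_mul c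
      rcases Int.even_mul.1 h with h | h
      · exact h
      · obtain ⟨t, ht⟩ := h
        omega
    obtain ⟨m, hm⟩ := hre
    have hr' : r = 2 * m := by omega
    subst hr'
    have hc : c = m * k := by linarith
    subst hc
    by_cases hm1 : m = 1
    · left
      subst hm1
      refine ⟨(0, 0, -1), ?_, Or.inl ⟨?_, Or.inr ?_⟩⟩ <;> simp
    · have hm2 : 2 ≤ m := by omega
      right
      obtain ⟨μ, e, he, he0, he1⟩ : ∃ μ e : ℤ, d * k ^ 2 - 2 * μ = e ∧ 0 ≤ e ∧ e ≤ 1 :=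
        ⟨d * k ^ 2 / 2, d * k ^ 2 % 2, by omega, by omega, by omega⟩
      obtain ⟨N, hNe⟩ : ∃ N : ℤ, N = d * k ^ 2 * m - 2 * s := ⟨_, rfl⟩
      have hvN : 2 ≤ 2 * m * N := by
        have : 2 * m * N = 2 * d * (m * k) * (m * k) - 2 * m * s - 2 * m * s := by
          rw [hNe]; ring
        linarith
      have hN : 1 ≤ N := by
        by_contra h
        nlinarith [mul_nonneg (by linarith : (0:ℤ) ≤ m) (by omega : 0 ≤ -N)]
      have h1 : 0 ≤ (m - 1) * (N - e) := mul_nonneg (by linarith) (by linarith)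
      have h2 : 0 ≤ m * (N - e) := mul_nonneg (by linarith) (by linarith)
      have h3 : 0 < (m - 1) * N := mul_pos (by linarith) (by linarith)
      have h4 : 0 ≤ m * e := mul_nonneg (by linarith) he0
      refine ⟨(2 * m - 2, m * k - k, s - μ), (2, k, μ), ?_, ?_, ?_, ?_, ?_, ?_, ?_⟩
      · simp only; ring
      · simp only; ring
      · simp
      · simp only
        subst he hNe
        linarith
      · simp only
        subst he
        linarith
      · simp only
        subst he hNe
        linarith
      · simp only
        subst he hNe
        linarith
end

section
/- Fix an integer d ≥ 1 and equip ℤ³ with the Mukai pairing ⟨(r₁,c₁,s₁),(r₂,c₂,s₂)⟩ = 2d·c₁c₂ − r₁s₂ − r₂s₁. Let r ≥ 1, c, s be integers with r | 2c and r ∤ c, and set v = (r,c,s). Then there is no w ∈ H_v with w² = 0 and ⟨w,v⟩ = 1. -/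
/-- If `r ∣ 2c` but `r ∤ c`, then the vertical-wall lattice `H_v` of `v = (r,c,s)`
contains no isotropic class pairing to `1` with `v`. -/
theorem no_isotropic_class_pairing_one
    (d : ℤ) (hd : 1 ≤ d) (r c s : ℤ) (hr : 1 ≤ r)
    (hr2c : r ∣ 2 * c) (hrc : ¬ r ∣ c) :
    ¬ ∃ w : ℤ × ℤ × ℤ, c * w.1 = r * w.2.1 ∧
        mk3 d w w = 0 ∧ mk3 d w (r, c, s) = 1 := by
  rintro ⟨⟨l, k', m⟩, h1, -, h3⟩
  simp only [mk3] at h1 h3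
  obtain ⟨k, hk⟩ := hr2c
  have hkodd : Odd k := by
    rw [← Int.not_even_iff_odd]
    rintro ⟨j, hj⟩
    refine hrc ⟨j, ?_⟩
    subst hj
    linarith
  have hreven : Even r := by
    have h : Even (r * k) := hk ▸ even_two_mul c
    rcases Int.even_mul.1 h with h | h
    · exact h
    · exact absurd h (Int.not_even_iff_odd.2 hkodd)
  have hkl : k * l = 2 * k' := by
    have hr0 : r ≠ 0 := by omega
    apply mul_left_cancel₀ hr0
    linear_combination 2 * h1 - l * hk
  have hl : Even l := by
    have h : Even (k * l) := hkl ▸ even_two_mul k'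
    rcases Int.even_mul.1 h with h | h
    · exact absurd h (Int.not_even_iff_odd.2 hkodd)
    · exact h
  obtain ⟨a, rfl⟩ := hreven
  obtain ⟨b, rfl⟩ := hl
  have : 2 * (d * k' * c - b * s - a * m) = 1 := by linear_combination h3
  omega
end

section
/- Let (N,B) be an even nondegenerate lattice, D ∈ N a primitive element, and let r ≥ 1, c, s be integers with gcd(r,c,s) = 1. Assume that for every nonzero L ∈ N, the product r·div(L) divides 2c·B(D,L). Then r divides c²·D² and gcd(r, c, c²D²/r − s) = 1; in other words, the class e = (r, cD, c²D²/r − s) is a well-defined (integral) primitive element of the Mukai lattice ℤ ⊕ N ⊕ ℤ. -/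
theorem aux_functional {N : Type*} [AddCommGroup N] [Module.Free ℤ N] [Module.Finite ℤ N]
    (D : N) (hDprim : ∀ (k : ℤ) (y : N), D = k • y → k = 1 ∨ k = -1) :
    ∃ f : N →ₗ[ℤ] ℤ, f D = 1 := by
  let b := Module.Free.chooseBasis ℤ N
  let I : Ideal ℤ := LinearMap.range (Module.Dual.eval ℤ N D)
  obtain ⟨g, hg⟩ := (IsPrincipalIdealRing.principal I).principal
  have hgI : g ∈ I := by rw [hg]; exact Submodule.mem_span_singleton_self g
  have hdvd : ∀ i, ∃ a, b.repr D i = g * a := by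
    intro i
    have h : b.repr D i ∈ I := ⟨b.coord i, by simp⟩
    rw [hg] at h
    exact Ideal.mem_span_singleton.mp h
  choose a ha using hdvd
  have hD : D = g • ∑ i, a i • b i := by
    rw [Finset.smul_sum]
    conv_lhs => rw [← b.sum_repr D]
    refine Finset.sum_congr rfl fun i _ => ?_
    rw [ha i, mul_smul]
  obtain ⟨f, hf⟩ := hgI
  have hf' : f D = g := by simpa using hf
  rcases hDprim g _ hD with h | h
  · exact ⟨f, by rw [hf', h]⟩
  · exact ⟨-f, by rw [LinearMap.neg_apply, hf', h]; norm_num⟩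

theorem aux_rep {N : Type*} [AddCommGroup N] [Module.Free ℤ N] [Module.Finite ℤ N]
    (B : LinearMap.BilinForm ℤ N)
    (hNondeg : ∀ x : N, (∀ y : N, B x y = 0) → x = 0) (f : N →ₗ[ℤ] ℤ) :
    ∃ (L : N) (k : ℤ), k ≠ 0 ∧ ∀ y, B L y = k * f y := by
  let T : (N × ℤ) →ₗ[ℤ] (N →ₗ[ℤ] ℤ) :=
    LinearMap.coprod B (LinearMap.toSpanSingleton ℤ _ f)
  have hT : ¬ Function.Injective T := by
    intro h
    have h1 := LinearMap.finrank_le_finrank_of_injective h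
    have h2 : Module.finrank ℤ (N →ₗ[ℤ] ℤ) = Module.finrank ℤ N := by
      rw [Module.finrank_linearMap]; simp
    rw [h2, Module.finrank_prod, Module.finrank_self] at h1
    omega
  rw [injective_iff_map_eq_zero] at hT
  push Not at hT
  obtain ⟨⟨x, k⟩, h0, hne⟩ := hT
  have hy : ∀ y, B x y = (-k) * f y := by
    intro y
    have := LinearMap.congr_fun h0 y
    simp [T] at this
    linarith
  refine ⟨x, -k, ?_, hy⟩
  intro hk
  apply hne
  have hx : x = 0 := hNondeg x fun y => by rw [hy, hk, zero_mul]
  rw [hx, neg_eq_zero.mp hk]; rfl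


/-- Under the paper's condition (∗), the class `e = (r, cD, c²D²/r − s)` is a
well-defined integral and primitive element of the Mukai lattice `ℤ ⊕ N ⊕ ℤ`:
`r ∣ c²D²` and `gcd(r, c, c²D²/r − s) = 1`. -/
theorem condition_star_implies_e_integral_primitive
    {N : Type*} [AddCommGroup N] [Module.Free ℤ N] [Module.Finite ℤ N]
    (B : LinearMap.BilinForm ℤ N)
    (hSymm : ∀ x y : N, B x y = B y x)
    (hEven : ∀ x : N, 2 ∣ B x x)
    (hNondeg : ∀ x : N, (∀ y : N, B x y = 0) → x = 0)
    (D : N) (hDprim : ∀ (k : ℤ) (y : N), D = k • y → k = 1 ∨ k = -1)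
    (r c s : ℤ) (hr : 1 ≤ r)
    (hgcd : Int.gcd (Int.gcd r c : ℤ) s = 1)
    (hstar : ∀ (L : N), L ≠ 0 → ∀ m : ℤ, 0 ≤ m →
      (∀ y : N, m ∣ B L y) → (∃ y : N, B L y = m) →
      (r * m) ∣ 2 * c * B D L) :
    r ∣ c ^ 2 * B D D ∧
    Int.gcd (Int.gcd r c : ℤ) (c ^ 2 * B D D / r - s) = 1 ∧
    (∀ (k : ℤ) (w : ℤ × N × ℤ),
      ((r, c • D, c ^ 2 * B D D / r - s) : ℤ × N × ℤ) = k • w →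
      k = 1 ∨ k = -1) := by
  obtain ⟨f, hf⟩ := aux_functional D hDprim
  obtain ⟨L, k, hk, hL⟩ := aux_rep B hNondeg f
  have hLne : L ≠ 0 := by
    rintro rfl
    have := hL D
    rw [hf] at this
    simp at this
    exact hk this.symm
  have hrc : r ∣ 2 * c := by
    have h := hstar L hLne |k| (abs_nonneg k)
      (fun y => by rw [hL, abs_dvd]; exact dvd_mul_right _ _)
      (by
        rcases abs_choice k with h | h
        · exact ⟨D, by rw [hL, hf, h, mul_one]⟩
        · exact ⟨-D, by rw [hL, map_neg, hf, h]; ring⟩)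
    rw [hSymm D L, hL, hf, mul_one] at h
    have h2 : r * k ∣ 2 * c * k := (mul_dvd_mul_left r ((dvd_abs k k).mpr dvd_rfl)).trans h
    exact Int.dvd_of_mul_dvd_mul_right hk h2
  obtain ⟨t, ht⟩ := hrc
  obtain ⟨u, hu⟩ := hEven D
  have heq : c ^ 2 * B D D = r * (c * (t * u)) := by
    rw [hu]; linear_combination c * u * ht
  have hq : c ^ 2 * B D D / r = c * (t * u) := by
    rw [heq]; exact Int.mul_ediv_cancel_left _ (by omega)
  rw [hq]
  have key : ∀ k : ℤ, k ∣ r → k ∣ c → k ∣ c * (t * u) - s → k ∣ 1 := by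
    intro k h1 h2 h3
    have h4 : k ∣ s := by
      have := dvd_sub (h2.mul_right (t * u)) h3
      simpa using this
    have := Int.dvd_coe_gcd (Int.dvd_coe_gcd h1 h2) h4
    rw [hgcd] at this
    exact_mod_cast this
  refine ⟨⟨_, heq⟩, ?_, ?_⟩
  · have h1 := Int.gcd_dvd_left (Int.gcd r c : ℤ) (c * (t * u) - s)
    have := key _ (h1.trans (Int.gcd_dvd_left r c)) (h1.trans (Int.gcd_dvd_right r c))
      (Int.gcd_dvd_right (Int.gcd r c : ℤ) (c * (t * u) - s))
    exact Nat.dvd_one.mp (by exact_mod_cast this)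
  · rintro k ⟨w1, w2, w3⟩ h
    simp only [Prod.smul_mk, Prod.mk.injEq, smul_eq_mul] at h
    obtain ⟨h1, h2, h3⟩ := h
    have h4 : c = k * f w2 := by
      have := congrArg f h2
      simpa [hf] using this
    exact Int.isUnit_iff.mp (isUnit_of_dvd_one (key k ⟨_, h1⟩ ⟨_, h4⟩ ⟨_, h3⟩))
end
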